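/- Let ν > 0, t > 0 and B ≥ 0. Let w : (0,t) × ℝ^d → ℝ be jointly measurable with ‖w(s,·)‖_{L^∞} ≤ B (t - s) for every s ∈ (0,t). Then there is a constant C depending only on the dimension d such that ‖∫_0^t ((Δg_{ν(t-s)}) * w(s,·)) ds‖_{L^∞} ≤ C B t / ν. -/

import Mathlib

/-!
The Laplacian of the heat kernel is `Δg_s(x) = g_s(x) (|x|² / (4s²) - d / (2s))`. Writing
`|x|² / (4s²) = (2 / s) u` with `u = |x|² / (8s)` and using `u ≤ exp u`, half of the Gaussian decay
absorbs the quadratic factor: `|Δg_s(x)| ≤ (2 + d/2) s⁻¹ (4πs)^{-d/2} exp(-|x|² / (8s))`.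
The right-hand side integrates to `(2 + d/2) 2^{d/2} / s`, so with `s` replaced by `ν (t - s)`
the bound `|w(s,·)| ≤ B (t - s)` exactly cancels the singularity at `s = t`, and the convolution
is at most `(2 + d/2) 2^{d/2} B / ν` at every time `s ∈ (0,t)`.
-/

open MeasureTheory Real

/-- The Gaussian heat kernel `g_{s}(x) = (4πs)^{-d/2} exp(-|x|²/(4s))` on `ℝ^d`. -/
noncomputable def heatKer (d : ℕ) (s : ℝ) (x : EuclideanSpace ℝ (Fin d)) : ℝ :=
  (4 * Real.pi * s) ^ (-(d : ℝ) / 2) * Real.exp (-‖x‖ ^ 2 / (4 * s))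

/-- The Laplacian `Δg_s` of the heat kernel. -/
noncomputable def lapKer (d : ℕ) (s : ℝ) (x : EuclideanSpace ℝ (Fin d)) : ℝ :=
  ∑ i : Fin d, fderiv ℝ (fun y => fderiv ℝ (heatKer d s) y (EuclideanSpace.single i 1)) x
    (EuclideanSpace.single i 1)

lemma hasFDerivAt_heatKer (d : ℕ) (s : ℝ) (x : EuclideanSpace ℝ (Fin d)) :
    HasFDerivAt (heatKer d s) ((-heatKer d s x / (2 * s)) • innerSL ℝ x) x := by
  have h : HasFDerivAt (fun x : EuclideanSpace ℝ (Fin d) => -‖x‖ ^ 2 / (4 * s))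
      ((-1 / (2 * s)) • innerSL ℝ x) x := by
    have h2 := (hasStrictFDerivAt_norm_sq x).hasFDerivAt.mul_const (-1 / (4 * s))
    have e : (fun x : EuclideanSpace ℝ (Fin d) => -‖x‖ ^ 2 / (4 * s)) =
        fun x => ‖x‖ ^ 2 * (-1 / (4 * s)) := by ext y; ring
    rw [e]
    refine h2.congr_fderiv ?_
    ext y
    simp
    ring
  have h3 := (h.exp).const_mul ((4 * Real.pi * s) ^ (-(d : ℝ) / 2))
  refine h3.congr_fderiv ?_
  ext y
  simp [heatKer]
  ring

lemma fderiv_heatKer_single (d : ℕ) (s : ℝ) (x : EuclideanSpace ℝ (Fin d)) (i : Fin d) :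
    fderiv ℝ (heatKer d s) x (EuclideanSpace.single i 1) = -heatKer d s x / (2 * s) * x i := by
  rw [(hasFDerivAt_heatKer d s x).fderiv]
  simp [EuclideanSpace.inner_single_right]

lemma lapKer_eq (d : ℕ) (s : ℝ) (x : EuclideanSpace ℝ (Fin d)) :
    lapKer d s x = heatKer d s x * (‖x‖ ^ 2 / (4 * s ^ 2) - d / (2 * s)) := by
  have key : ∀ i : Fin d,
      fderiv ℝ (fun y => fderiv ℝ (heatKer d s) y (EuclideanSpace.single i 1)) x
        (EuclideanSpace.single i 1) =
      heatKer d s x / (4 * s ^ 2) * (x i) ^ 2 - heatKer d s x / (2 * s) := by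
    intro i
    simp_rw [fderiv_heatKer_single]
    have h1 := (hasFDerivAt_heatKer d s x).mul_const (-1 / (2 * s))
    have h2 := (EuclideanSpace.proj i : EuclideanSpace ℝ (Fin d) →L[ℝ] ℝ).hasFDerivAt (x := x)
    have h3 := h1.mul h2
    have h4 : (fun y : EuclideanSpace ℝ (Fin d) => -heatKer d s y / (2 * s) * y i) =
        (fun y => heatKer d s y * (-1 / (2 * s))) *
          (EuclideanSpace.proj i : EuclideanSpace ℝ (Fin d) →L[ℝ] ℝ) := by
      ext y
      change _ = heatKer d s y * (-1 / (2 * s)) * y i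
      ring
    rw [h4, h3.fderiv]
    simp [EuclideanSpace.inner_single_right]
    ring
  unfold lapKer
  rw [Finset.sum_congr rfl fun i _ => key i, Finset.sum_sub_distrib, ← Finset.mul_sum,
    ← EuclideanSpace.real_norm_sq_eq]
  simp
  ring

lemma abs_lapKer_le (d : ℕ) {s : ℝ} (hs : 0 < s) (x : EuclideanSpace ℝ (Fin d)) :
    |lapKer d s x| ≤
      (2 + d / 2) / s * (4 * Real.pi * s) ^ (-(d : ℝ) / 2) *
        Real.exp (-(1 / (8 * s)) * ‖x‖ ^ 2) := by
  have hu : 0 ≤ ‖x‖ ^ 2 / (8 * s) := by positivity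
  have hue : ‖x‖ ^ 2 / (8 * s) ≤ Real.exp (‖x‖ ^ 2 / (8 * s)) := by
    linarith [Real.add_one_le_exp (‖x‖ ^ 2 / (8 * s))]
  have h1e : 1 ≤ Real.exp (‖x‖ ^ 2 / (8 * s)) := Real.one_le_exp hu
  have hA : 0 < (4 * Real.pi * s) ^ (-(d : ℝ) / 2) := by positivity
  have hsplit : Real.exp (-(1 / (8 * s)) * ‖x‖ ^ 2) =
      Real.exp (-‖x‖ ^ 2 / (4 * s)) * Real.exp (‖x‖ ^ 2 / (8 * s)) := by
    rw [← Real.exp_add]; congr 1; field_simp; ring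
  have hfac : |‖x‖ ^ 2 / (4 * s ^ 2) - d / (2 * s)| ≤
      (2 + d / 2) / s * Real.exp (‖x‖ ^ 2 / (8 * s)) := by
    have e1 : ‖x‖ ^ 2 / (4 * s ^ 2) = 2 / s * (‖x‖ ^ 2 / (8 * s)) := by field_simp; ring
    have e2 : (d : ℝ) / (2 * s) = d / 2 / s * 1 := by field_simp
    calc |‖x‖ ^ 2 / (4 * s ^ 2) - d / (2 * s)|
        ≤ ‖x‖ ^ 2 / (4 * s ^ 2) + d / (2 * s) := by
          have p1 : 0 ≤ ‖x‖ ^ 2 / (4 * s ^ 2) := by positivity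
          have p2 : 0 ≤ (d : ℝ) / (2 * s) := by positivity
          rw [abs_le]; constructor <;> linarith
      _ ≤ 2 / s * Real.exp (‖x‖ ^ 2 / (8 * s)) + d / 2 / s * Real.exp (‖x‖ ^ 2 / (8 * s)) := by
          rw [e1, e2]; gcongr
      _ = _ := by ring
  rw [lapKer_eq, abs_mul, heatKer, abs_of_pos (by positivity), hsplit]
  calc _ ≤ (4 * Real.pi * s) ^ (-(d : ℝ) / 2) * Real.exp (-‖x‖ ^ 2 / (4 * s)) *
        ((2 + d / 2) / s * Real.exp (‖x‖ ^ 2 / (8 * s))) := by gcongr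
    _ = _ := by ring

lemma integral_exp_neg_norm_sq (d : ℕ) {s : ℝ} (hs : 0 < s) :
    ∫ x : EuclideanSpace ℝ (Fin d), Real.exp (-(1 / (8 * s)) * ‖x‖ ^ 2) =
      (8 * Real.pi * s) ^ ((d : ℝ) / 2) := by
  rw [GaussianFourier.integral_rexp_neg_mul_sq_norm (by positivity)]
  simp only [finrank_euclideanSpace, Fintype.card_fin]
  congr 1
  field_simp

/-- The `L¹` bound on `Δg_s`, in the form in which it is used: convolution against a function
bounded by `M`. -/
lemma abs_integral_lapKer_mul_le (d : ℕ) {s M : ℝ} (hs : 0 < s)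
    {f : EuclideanSpace ℝ (Fin d) → ℝ} (hf : ∀ y, |f y| ≤ M) :
    |∫ y, lapKer d s y * f y| ≤ (2 + d / 2) * 2 ^ ((d : ℝ) / 2) / s * M := by
  -- The Gaussian is integrable because its Bochner integral is not the junk value `0`.
  have hint : Integrable
      (fun x : EuclideanSpace ℝ (Fin d) => Real.exp (-(1 / (8 * s)) * ‖x‖ ^ 2)) := by
    by_contra h
    have h0 := integral_undef h
    rw [integral_exp_neg_norm_sq d hs] at h0
    have : 0 < (8 * Real.pi * s) ^ ((d : ℝ) / 2) := by positivity
    exact this.ne' h0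
  have hle := norm_integral_le_of_norm_le (f := fun y => lapKer d s y * f y)
    ((hint.const_mul ((2 + d / 2) / s * (4 * Real.pi * s) ^ (-(d : ℝ) / 2))).mul_const M)
    (Filter.Eventually.of_forall fun y => by
      rw [Real.norm_eq_abs, abs_mul]
      exact mul_le_mul (abs_lapKer_le d hs y) (hf y) (abs_nonneg _)
        ((abs_nonneg _).trans (abs_lapKer_le d hs y)))
  rw [integral_mul_const, integral_const_mul, integral_exp_neg_norm_sq d hs] at hle
  have hpow : (4 * Real.pi * s) ^ (-(d : ℝ) / 2) * (8 * Real.pi * s) ^ ((d : ℝ) / 2) =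
      2 ^ ((d : ℝ) / 2) := by
    rw [show 8 * Real.pi * s = 2 * (4 * Real.pi * s) by ring,
      Real.mul_rpow (x := 2) (by norm_num) (by positivity), mul_left_comm,
      ← Real.rpow_add (by positivity), show -(d : ℝ) / 2 + d / 2 = 0 by ring]
    simp
  rw [mul_assoc ((2 + (d : ℝ) / 2) / s), hpow] at hle
  exact hle.trans_eq (by ring)

/-- Let `ν > 0`, `t > 0`, `B ≥ 0`, and let `w` be jointly measurable with
`‖w(s,·)‖_{L^∞} ≤ B (t - s)` for every `s ∈ (0,t)`. Then there is `C` depending only on `d`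
such that `‖∫_0^t (Δg_{ν(t-s)}) * w(s,·) ds‖_{L^∞} ≤ C B t / ν`. -/
theorem lapKer_time_integral_linear_bound (d : ℕ) :
    ∃ C : ℝ, 0 < C ∧
      ∀ (ν t B : ℝ) (w : ℝ → EuclideanSpace ℝ (Fin d) → ℝ),
        0 < ν → 0 < t → 0 ≤ B → Measurable (Function.uncurry w) →
        (∀ s ∈ Set.Ioo (0 : ℝ) t, ∀ x, |w s x| ≤ B * (t - s)) →
        ∀ x, |∫ s in Set.Ioo (0 : ℝ) t, ∫ y, lapKer d (ν * (t - s)) y * w s (x - y)| ≤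
          C * B * t / ν := by
  refine ⟨(2 + d / 2) * 2 ^ ((d : ℝ) / 2), by positivity, ?_⟩
  intro ν t B w hν ht hB _ hw x
  have hin : ∀ s ∈ Set.Ioo (0 : ℝ) t, ‖∫ y, lapKer d (ν * (t - s)) y * w s (x - y)‖ ≤
      (2 + d / 2) * 2 ^ ((d : ℝ) / 2) * B / ν := by
    intro s hs
    have hts : 0 < t - s := sub_pos.2 hs.2
    have h := abs_integral_lapKer_mul_le d (mul_pos hν hts) fun y => hw s hs (x - y)
    have e : (2 + (d : ℝ) / 2) * 2 ^ ((d : ℝ) / 2) / (ν * (t - s)) * (B * (t - s)) =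
        (2 + d / 2) * 2 ^ ((d : ℝ) / 2) * B / ν := by field_simp
    rwa [e] at h
  have h := norm_setIntegral_le_of_norm_le_const (μ := volume) (by simp) hin
  rw [Real.norm_eq_abs, Measure.real, Real.volume_Ioo, sub_zero, ENNReal.toReal_ofReal ht.le] at h
  exact h.trans_eq (by ring)
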